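/- Let Y_+ additionally be pointed, let y_0 be a minimal point of (P(0)) with y_0 ∈ F(x_0) for some feasible x_0, and let L_{y_0} be the Lagrange process of (P(0)) at y_0. Assume that the set Y_+ ∩ S_Y is compact, where S_Y is the unit sphere of Y, and that L_{y_0} is a Lagrange multiplier of (P(0)) at y_0. Then Min(DV(0,y_0)(z)) = Min(D(V+Y_+)(0,y_0)(z)) for every z ∈ Z, where DV(0,y_0) and D(V+Y_+)(0,y_0) are the contingent derivatives of V and V+Y_+ at (0,y_0). -/

import Mathlib

/-!
Write a direction `y` of `D(V + Y₊)(0, y₀)(z)` as a limit of `ηₙ` with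
`y₀ + hₙ (ηₙ - κₙ) ∈ V(hₙ ζₙ)` and `κₙ ∈ Y₊`. If `κₙ` has a bounded subsequence, compactness of
`Y₊ ∩ S_Y` extracts a limit `k ∈ Y₊` of it, and `y - k ∈ DV(0, y₀)(z)`. If `‖κₙ‖ → ∞`, a cluster
point `e ∈ Y₊` of `κₙ / ‖κₙ‖` has norm one and `-e` lies in the Shi derivative of `V` at
`(0, y₀)` in the direction `0`. Every separating pair bounds that derivative, so `-e` belongs to
`L_{y₀}(0)`, which meets `-Y₊` only at `0` because `L_{y₀}` is a Lagrange multiplier. Hence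
`DV ⊆ D(V + Y₊) ⊆ DV + Y₊`, and for a pointed convex cone such sets have the same minimal points.
-/

open Pointwise Filter Topology

namespace Paper

section Defs

variable {E : Type*} [NormedAddCommGroup E] [NormedSpace ℝ E]

/-- The cone hull of a set: all nonnegative multiples of its elements. -/
def coneHull (A : Set E) : Set E := {x | ∃ r : ℝ, 0 ≤ r ∧ ∃ a ∈ A, x = r • a}

/-- A cone: a nonempty set closed under multiplication by nonnegative scalars. -/
def IsCone (K : Set E) : Prop := K.Nonempty ∧ ∀ r : ℝ, 0 ≤ r → ∀ x ∈ K, r • x ∈ K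

/-- A pointed cone: `K ∩ (-K) = {0}`. -/
def IsPointed (K : Set E) : Prop := K ∩ (-K) = {0}

/-- A proper cone: `{0} ≠ K ≠ E`. -/
def IsProper (K : Set E) : Prop := K ≠ {0} ∧ K ≠ Set.univ

/-- A solid cone: nonempty interior. -/
def IsSolid (K : Set E) : Prop := (interior K).Nonempty

/-- The contingent cone to `A` at `w`. -/
def contingentCone (A : Set E) (w : E) : Set E :=
  {v | Filter.liminf (fun h : ℝ => Metric.infDist (w + h • v) A / h) (𝓝[>] (0:ℝ)) = 0}

end Defs

section SV

variable {X Y Z : Type*}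
  [NormedAddCommGroup X] [NormedSpace ℝ X]
  [NormedAddCommGroup Y] [NormedSpace ℝ Y]
  [NormedAddCommGroup Z] [NormedSpace ℝ Z]

/-- The graph of a set-valued map. -/
def graph (Δ : Z → Set Y) : Set (Z × Y) := {p | p.2 ∈ Δ p.1}

/-- The image of a set by a set-valued map. -/
def imageSet (Δ : Z → Set Y) (A : Set Z) : Set Y := ⋃ w ∈ A, Δ w

/-- The feasible set map `S(z) = {x ∈ Ω : G(x) ∩ (z - Z₊) ≠ ∅}`. -/
def Smap (Ω : Set X) (G : X → Set Z) (Zp : Set Z) (z : Z) : Set X :=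
  {x | x ∈ Ω ∧ (G x ∩ ({z} - Zp)).Nonempty}

/-- The value map `V(z) = F(S(z))`. -/
def Vmap (Ω : Set X) (F : X → Set Y) (G : X → Set Z) (Zp : Set Z) (z : Z) : Set Y :=
  ⋃ x ∈ Smap Ω G Zp z, F x

/-- The map `(V + Y₊)(z) = V(z) + Y₊`. -/
def VplusMap (Ω : Set X) (F : X → Set Y) (G : X → Set Z) (Zp : Set Z) (Yp : Set Y)
    (z : Z) : Set Y :=
  Vmap Ω F G Zp z + Yp

/-- The graph of `V + Y₊`. -/
def GraphVplus (Ω : Set X) (F : X → Set Y) (G : X → Set Z) (Zp : Set Z) (Yp : Set Y) :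
    Set (Z × Y) :=
  {p : Z × Y | p.2 ∈ Vmap Ω F G Zp p.1 + Yp}

/-- Minimal points of a set `A` with respect to the cone `Yp`. -/
def MinSet (Yp : Set Y) (A : Set Y) : Set Y :=
  {a ∈ A | A ∩ ({a} - Yp) ⊆ {a} + Yp}

/-- The marginal map `M(z) = Min(V(z))`. -/
def Mmap (Ω : Set X) (F : X → Set Y) (G : X → Set Z) (Zp : Set Z) (Yp : Set Y)
    (z : Z) : Set Y :=
  MinSet Yp (Vmap Ω F G Zp z)

/-- `y₀` is a nondominated point of `(P(0))`. -/
def Nondominated (Ω : Set X) (F : X → Set Y) (G : X → Set Z) (Zp : Set Z) (Yp : Set Y)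
    (y0 : Y) : Prop :=
  y0 ∈ closure (Vmap Ω F G Zp 0) ∧
    Vmap Ω F G Zp 0 ∩ ({y0} - Yp) ⊆ {y0} + Yp

/-- `y₀` is a minimal point of `(P(0))`. -/
def MinimalPoint (Ω : Set X) (F : X → Set Y) (G : X → Set Z) (Zp : Set Z) (Yp : Set Y)
    (y0 : Y) : Prop :=
  y0 ∈ Vmap Ω F G Zp 0 ∧
    Vmap Ω F G Zp 0 ∩ ({y0} - Yp) ⊆ {y0} + Yp

/-- The set `S_{Y₊}(y₀)` of separating pairs of continuous linear functionals. -/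
def Sdual (Ω : Set X) (F : X → Set Y) (G : X → Set Z) (Zp : Set Z) (Yp : Set Y) (y0 : Y) :
    Set ((Z →L[ℝ] ℝ) × (Y →L[ℝ] ℝ)) :=
  {p | (∀ z' ∈ -Zp, ∀ y' ∈ ({y0} : Set Y) - Yp, p.1 z' + p.2 y' ≤ p.2 y0) ∧
       (∀ q ∈ GraphVplus Ω F G Zp Yp, p.2 y0 ≤ p.1 q.1 + p.2 q.2)}

/-- `P(Z,Y)`: closed convex processes with full domain. -/
def PZY : Set (Z → Set Y) :=
  {Δ | IsClosed (graph Δ) ∧ Convex ℝ (graph Δ) ∧ IsCone (graph Δ) ∧ ∀ z, (Δ z).Nonempty}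

/-- The set `Λ_{(z*,y*)}` of processes associated to `(z*,y*)`. -/
def Lambda (zs : Z →L[ℝ] ℝ) (ys : Y →L[ℝ] ℝ) : Set (Z → Set Y) :=
  {Δ | Δ ∈ PZY ∧ graph Δ \ {0} ⊆ {p : Z × Y | 0 < -(zs p.1) + ys p.2}}

/-- The set `Γ_{y₀}` of processes associated to `y₀`. -/
def Gamma (Ω : Set X) (F : X → Set Y) (G : X → Set Z) (Zp : Set Z) (Yp : Set Y) (y0 : Y) :
    Set (Z → Set Y) :=
  ⋃ p ∈ Sdual Ω F G Zp Yp y0 \ {0}, Lambda p.1 p.2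

/-- The Slater constraint qualification. -/
def Slater (Ω : Set X) (F : X → Set Y) (G : X → Set Z) (Zp : Set Z) : Prop :=
  ∃ x1 ∈ Ω, (F x1).Nonempty ∧ (G x1 ∩ (-interior Zp)).Nonempty

/-- `Ψ(Δ) = ∪_{x∈Ω}(F(x) + Δ(G(x)+Z₊))`. -/
def Umap (Ω : Set X) (F : X → Set Y) (G : X → Set Z) (Zp : Set Z) (Δ : Z → Set Y) : Set Y :=
  ⋃ x ∈ Ω, (F x + imageSet Δ (G x + Zp))

/-- The dual map `Φ(Δ)`: nondominated points of the closure of `Ψ(Δ)`. -/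
def Phi (Ω : Set X) (F : X → Set Y) (G : X → Set Z) (Zp : Set Z) (Yp : Set Y)
    (Δ : Z → Set Y) : Set Y :=
  {y ∈ closure (Umap Ω F G Zp Δ) | Umap Ω F G Zp Δ ∩ ({y} - Yp) ⊆ {y} + Yp}

/-- `Δ` is a Lagrange multiplier of `(P(0))` at `y₀`. -/
def LagrangeMultiplier (Ω : Set X) (F : X → Set Y) (G : X → Set Z) (Zp : Set Z) (Yp : Set Y)
    (Δ : Z → Set Y) (y0 : Y) : Prop :=
  y0 ∈ closure (Umap Ω F G Zp Δ) ∧ Umap Ω F G Zp Δ ∩ ({y0} - Yp) ⊆ {y0} + Yp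

/-- The graph of the Lagrange process of `(P(0))` at `y₀`. -/
def GraphLagrange (Ω : Set X) (F : X → Set Y) (G : X → Set Z) (Zp : Set Z) (Yp : Set Y)
    (y0 : Y) : Set (Z × Y) :=
  {p : Z × Y | ∀ q ∈ Sdual Ω F G Zp Yp y0, q.1 p.1 ≤ q.2 p.2}

/-- The Lagrange process of `(P(0))` at `y₀`, as a set-valued map. -/
def Lagrange (Ω : Set X) (F : X → Set Y) (G : X → Set Z) (Zp : Set Z) (Yp : Set Y) (y0 : Y)
    (z : Z) : Set Y :=
  {y | (z, y) ∈ GraphLagrange Ω F G Zp Yp y0}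

/-- The contingent derivative of a set-valued map `H` at `(z₀, y₀)`. -/
def contingentDeriv (H : Z → Set Y) (z0 : Z) (y0 : Y) (z : Z) : Set Y :=
  {y | (z, y) ∈ contingentCone (graph H) (z0, y0)}

/-- The S-derivative (Shi derivative) of a set-valued map `H` at `(z₀, y₀)`. -/
def Sderiv (H : Z → Set Y) (z0 : Z) (y0 : Y) (z : Z) : Set Y :=
  {y | ∃ (h : ℕ → ℝ) (zn : ℕ → Z) (yn : ℕ → Y),
    (∀ n, 0 < h n) ∧ Filter.Tendsto zn Filter.atTop (𝓝 z) ∧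
    Filter.Tendsto yn Filter.atTop (𝓝 y) ∧
    Filter.Tendsto (fun n => h n • zn n) Filter.atTop (𝓝 (0:Z)) ∧
    ∀ n, y0 + h n • yn n ∈ H (z0 + h n • zn n)}

/-- The standing assumptions of the paper: `Y₊`, `Z₊` proper solid convex cones, `Ω` nonempty
convex, `F` is `Y₊`-convex and `G` is `Z₊`-convex. -/
def StandingHyp (Ω : Set X) (F : X → Set Y) (G : X → Set Z) (Zp : Set Z) (Yp : Set Y) : Prop :=
  IsCone Yp ∧ IsProper Yp ∧ IsSolid Yp ∧ Convex ℝ Yp ∧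
  IsCone Zp ∧ IsProper Zp ∧ IsSolid Zp ∧ Convex ℝ Zp ∧
  Ω.Nonempty ∧ Convex ℝ Ω ∧
  Convex ℝ {p : X × Y | p.1 ∈ Ω ∧ p.2 ∈ F p.1 + Yp} ∧
  Convex ℝ {p : X × Z | p.1 ∈ Ω ∧ p.2 ∈ G p.1 + Zp}

end SV

variable {X Y Z : Type*}
  [NormedAddCommGroup X] [NormedSpace ℝ X]
  [NormedAddCommGroup Y] [NormedSpace ℝ Y]
  [NormedAddCommGroup Z] [NormedSpace ℝ Z]

theorem liminf_eq_zero_iff_forall_frequently_lt {ι : Type*} {l : Filter ι} {f : ι → ℝ} {C : ℝ}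
    (hnonneg : ∀ᶠ i in l, 0 ≤ f i) (hle : ∃ᶠ i in l, f i ≤ C) :
    liminf f l = 0 ↔ ∀ ε > 0, ∃ᶠ i in l, f i < ε := by
  have hbdd : IsBoundedUnder (· ≥ ·) l f := isBoundedUnder_of_eventually_ge hnonneg
  have hcobdd : IsCoboundedUnder (· ≥ ·) l f := .of_frequently_le hle
  refine ⟨fun h ε hε => frequently_lt_of_liminf_lt hcobdd (h ▸ hε), fun h => ?_⟩
  refine le_antisymm (le_of_forall_pos_le_add fun ε hε => ?_) (le_liminf_of_le hcobdd hnonneg)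
  rw [zero_add]
  exact liminf_le_of_frequently_le ((h ε hε).mono fun _ => le_of_lt) hbdd

section ContingentCone

variable {E : Type*} [NormedAddCommGroup E] [NormedSpace ℝ E] {A : Set E} {v w : E}

theorem infDist_add_smul_div_lt_iff (hA : A.Nonempty) {h ε : ℝ} (hh : 0 < h) :
    Metric.infDist (w + h • v) A / h < ε ↔ ∃ u ∈ Metric.ball v ε, w + h • u ∈ A := by
  have hsurj : Function.Surjective fun u : E => w + h • u := fun a =>
    ⟨h⁻¹ • (a - w), by simp [smul_inv_smul₀ hh.ne']⟩
  have hdist (u : E) : dist (w + h • v) (w + h • u) = dist u v * h := by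
    rw [dist_add_left, dist_smul₀, Real.norm_of_nonneg hh.le, dist_comm, mul_comm]
  rw [div_lt_iff₀ hh, Metric.infDist_lt_iff hA, hsurj.exists]
  simp only [hdist, mul_lt_mul_iff_left₀ hh, Metric.mem_ball, and_comm]

theorem infDist_add_smul_div_le (hw : w ∈ closure A) {h : ℝ} (hh : 0 < h) :
    Metric.infDist (w + h • v) A / h ≤ ‖v‖ := by
  rw [div_le_iff₀ hh, ← Metric.infDist_closure]
  refine (Metric.infDist_le_dist_of_mem hw).trans_eq ?_
  rw [dist_self_add_left, norm_smul, Real.norm_of_nonneg hh.le, mul_comm]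

theorem mem_contingentCone_iff_frequently (hw : w ∈ closure A) :
    v ∈ contingentCone A w ↔ ∃ᶠ p in 𝓝[>] (0 : ℝ) ×ˢ 𝓝 v, w + p.1 • p.2 ∈ A := by
  have hA : A.Nonempty := closure_nonempty_iff.1 ⟨w, hw⟩
  have hpos : ∀ᶠ h in 𝓝[>] (0 : ℝ), 0 < h := eventually_mem_nhdsWithin
  rw [contingentCone, Set.mem_ofPred_eq, liminf_eq_zero_iff_forall_frequently_lt
    (hpos.mono fun h hh => div_nonneg Metric.infDist_nonneg hh.le)
    (hpos.mono fun h hh => infDist_add_smul_div_le hw hh).frequently,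
    ((nhdsGT_basis (0 : ℝ)).prod Metric.nhds_basis_ball).frequently_iff]
  simp only [(nhdsGT_basis (0 : ℝ)).frequently_iff]
  constructor
  · rintro hfreq ⟨δ, ε⟩ ⟨hδ, hε⟩
    obtain ⟨h, hh, hlt⟩ := hfreq ε hε δ hδ
    obtain ⟨u, hu, hmem⟩ := (infDist_add_smul_div_lt_iff hA hh.1).1 hlt
    exact ⟨(h, u), ⟨hh, hu⟩, hmem⟩
  · intro hfreq ε hε δ hδ
    obtain ⟨⟨h, u⟩, ⟨hh, hu⟩, hmem⟩ := hfreq (i := (δ, ε)) ⟨hδ, hε⟩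
    exact ⟨h, hh, (infDist_add_smul_div_lt_iff hA hh.1).2 ⟨u, hu, hmem⟩⟩

theorem contingentCone_mono {B : Set E} (hAB : A ⊆ B) (hw : w ∈ closure A) :
    contingentCone A w ⊆ contingentCone B w := fun _ hv =>
  (mem_contingentCone_iff_frequently (closure_mono hAB hw)).2 <|
    ((mem_contingentCone_iff_frequently hw).1 hv).mono fun _ hp => hAB hp

end ContingentCone

section Derivatives

variable {H : Z → Set Y} {z₀ z : Z} {y₀ y : Y}

theorem mem_contingentDeriv_iff_seq (hw : (z₀, y₀) ∈ closure (graph H)) :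
    y ∈ contingentDeriv H z₀ y₀ z ↔ ∃ (h : ℕ → ℝ) (ζ : ℕ → Z) (η : ℕ → Y),
      (∀ n, 0 < h n) ∧ Tendsto h atTop (𝓝 0) ∧ Tendsto ζ atTop (𝓝 z) ∧ Tendsto η atTop (𝓝 y) ∧
      ∀ n, y₀ + h n • η n ∈ H (z₀ + h n • ζ n) := by
  rw [contingentDeriv, Set.mem_ofPred_eq, mem_contingentCone_iff_frequently hw]
  constructor
  · intro hfreq
    have hpos : ∀ᶠ p in 𝓝[>] (0 : ℝ) ×ˢ 𝓝 (z, y), 0 < p.1 :=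
      tendsto_fst.eventually eventually_mem_nhdsWithin
    obtain ⟨p, hp, hmem⟩ := frequently_iff_seq_forall.1 (hfreq.and_eventually hpos)
    have hdir : Tendsto (fun n => (p n).2) atTop (𝓝 z ×ˢ 𝓝 y) := by
      rw [← nhds_prod_eq]
      exact tendsto_snd.comp hp
    exact ⟨fun n => (p n).1, fun n => (p n).2.1, fun n => (p n).2.2, fun n => (hmem n).2,
      tendsto_nhds_of_tendsto_nhdsWithin (tendsto_fst.comp hp),
      tendsto_fst.comp hdir, tendsto_snd.comp hdir, fun n => (hmem n).1⟩
  · rintro ⟨h, ζ, η, hpos, hh, hζ, hη, hmem⟩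
    have hh' : Tendsto h atTop (𝓝[>] 0) := tendsto_nhdsWithin_iff.2 ⟨hh, .of_forall hpos⟩
    exact frequently_iff_seq_forall.2
      ⟨fun n => (h n, ζ n, η n), hh'.prodMk (hζ.prodMk_nhds hη), hmem⟩

theorem mem_sderiv_of_eventually {h : ℕ → ℝ} {ζ : ℕ → Z} {η : ℕ → Y}
    (hpos : ∀ᶠ n in atTop, 0 < h n) (hζ : Tendsto ζ atTop (𝓝 z)) (hη : Tendsto η atTop (𝓝 y))
    (hhζ : Tendsto (fun n => h n • ζ n) atTop (𝓝 0))
    (hmem : ∀ᶠ n in atTop, y₀ + h n • η n ∈ H (z₀ + h n • ζ n)) :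
    y ∈ Sderiv H z₀ y₀ z := by
  obtain ⟨N, hN⟩ := eventually_atTop.1 (hpos.and hmem)
  have hshift : Tendsto (· + N) atTop atTop := tendsto_add_atTop_nat N
  exact ⟨fun n => h (n + N), fun n => ζ (n + N), fun n => η (n + N),
    fun n => (hN _ (Nat.le_add_left N n)).1, hζ.comp hshift, hη.comp hshift, hhζ.comp hshift,
    fun n => (hN _ (Nat.le_add_left N n)).2⟩

end Derivatives

section Cones

variable {E : Type*} [NormedAddCommGroup E] [NormedSpace ℝ E] {K : Set E}

theorem IsCone.zero_mem (hK : IsCone K) : (0 : E) ∈ K := by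
  obtain ⟨x, hx⟩ := hK.1
  simpa using hK.2 0 le_rfl x hx

theorem IsCone.add_subset_of_convex (hK : IsCone K) (hconv : Convex ℝ K) : K + K ⊆ K := by
  have hsum : (1 + 1 : ℝ) • K = K + K := by
    rw [hconv.add_smul zero_le_one zero_le_one, one_smul]
  rw [← hsum]
  rintro _ ⟨x, hx, rfl⟩
  exact hK.2 _ (by norm_num) x hx

theorem IsCone.inv_norm_smul_mem_sphere (hK : IsCone K) {x : E} (hx : x ∈ K) (hx₀ : x ≠ 0) :
    ‖x‖⁻¹ • x ∈ K ∩ Metric.sphere 0 1 :=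
  ⟨hK.2 _ (inv_nonneg.2 (norm_nonneg x)) x hx,
    mem_sphere_zero_iff_norm.2 (norm_smul_inv_norm (𝕜 := ℝ) hx₀)⟩

theorem IsCone.isCompact_inter_closedBall (hK : IsCone K)
    (hcpt : IsCompact (K ∩ Metric.sphere 0 1)) (R : ℝ) :
    IsCompact (K ∩ Metric.closedBall 0 R) := by
  have himage : K ∩ Metric.closedBall 0 R = (fun p : ℝ × E => p.1 • p.2) ''
      (Set.Icc 0 R ×ˢ insert 0 (K ∩ Metric.sphere 0 1)) := by
    refine Set.Subset.antisymm (fun x ⟨hxK, hxR⟩ => ?_) ?_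
    · refine ⟨(‖x‖, ‖x‖⁻¹ • x), ⟨⟨norm_nonneg x, mem_closedBall_zero_iff.1 hxR⟩, ?_⟩, ?_⟩
      · rcases eq_or_ne x 0 with rfl | hx₀
        · simp
        · exact Or.inr (hK.inv_norm_smul_mem_sphere hxK hx₀)
      · rcases eq_or_ne x 0 with rfl | hx₀
        · simp
        · exact smul_inv_smul₀ (norm_ne_zero_iff.2 hx₀) x
    · rintro _ ⟨⟨r, x⟩, ⟨⟨hr, hrR⟩, rfl | ⟨hxK, hx⟩⟩, rfl⟩
      · simpa using And.intro hK.zero_mem (hr.trans hrR)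
      · refine ⟨hK.2 r hr x hxK, ?_⟩
        rwa [mem_closedBall_zero_iff, norm_smul, mem_sphere_zero_iff_norm.1 hx, mul_one,
          Real.norm_of_nonneg hr]
  rw [himage]
  exact (isCompact_Icc.prod (hcpt.insert 0)).image (by fun_prop)

end Cones

section Minimal

omit [NormedSpace ℝ Y]

variable {Yp A B : Set Y}

theorem IsPointed.eq_zero (hpt : IsPointed Yp) {k : Y} (hk : k ∈ Yp) (hnk : -k ∈ Yp) : k = 0 :=
  hpt.subset ⟨hk, hnk⟩

theorem IsPointed.inter_sub_subset_add_iff (hpt : IsPointed Yp) {a : Y} :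
    A ∩ ({a} - Yp) ⊆ {a} + Yp ↔ ∀ b ∈ A, a - b ∈ Yp → b = a := by
  have h₀ : (0 : Y) ∈ Yp := (hpt.superset rfl).1
  have hsub (b : Y) : b ∈ {a} - Yp ↔ a - b ∈ Yp := by
    refine ⟨?_, fun hab => ⟨a, rfl, a - b, hab, sub_sub_cancel a b⟩⟩
    rintro ⟨_, rfl, k, hk, rfl⟩
    simpa using hk
  have hadd (b : Y) : b ∈ {a} + Yp ↔ b - a ∈ Yp := by
    simp [Set.singleton_add, neg_add_eq_sub]
  simp only [Set.subset_def, Set.mem_inter_iff, and_imp, hsub, hadd]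
  refine forall₃_congr fun b _ hab => ⟨fun hba => ?_, fun hba => by simpa [hba] using h₀⟩
  exact sub_eq_zero.1 (hpt.eq_zero hba (by simpa using hab))

theorem IsPointed.mem_minSet_iff (hpt : IsPointed Yp) {a : Y} :
    a ∈ MinSet Yp A ↔ a ∈ A ∧ ∀ b ∈ A, a - b ∈ Yp → b = a :=
  and_congr_right fun _ => hpt.inter_sub_subset_add_iff

theorem IsPointed.minSet_eq_of_subset_add (hpt : IsPointed Yp) (hadd : Yp + Yp ⊆ Yp)
    (hAB : A ⊆ B) (hBA : B ⊆ A + Yp) : MinSet Yp A = MinSet Yp B := by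
  ext a
  rw [hpt.mem_minSet_iff, hpt.mem_minSet_iff]
  constructor
  · rintro ⟨ha, hmin⟩
    refine ⟨hAB ha, fun b hb hab => ?_⟩
    obtain ⟨c, hc, k, hk, rfl⟩ := Set.mem_add.1 (hBA hb)
    have hac : a - c ∈ Yp := by
      simpa [sub_add_eq_sub_sub] using hadd (Set.add_mem_add hab hk)
    obtain rfl : c = a := hmin c hc hac
    simpa using hpt.eq_zero hk (by simpa using hab)
  · rintro ⟨ha, hmin⟩
    obtain ⟨c, hc, k, hk, rfl⟩ := Set.mem_add.1 (hBA ha)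
    have hck : c = c + k := hmin c (hAB hc) (by simpa using hk)
    exact ⟨by rwa [← hck], fun b hb => hmin b (hAB hb)⟩

end Minimal

section Domination

variable {H : Z → Set Y} {Yp : Set Y} {z₀ : Z} {y₀ : Y}

omit [NormedSpace ℝ Y] [NormedAddCommGroup Z] [NormedSpace ℝ Z] in
theorem graph_subset_graph_add (h₀ : (0 : Y) ∈ Yp) :
    graph H ⊆ graph fun w => H w + Yp :=
  fun p hp => Set.subset_add_left (H p.1) h₀ hp

/-- Dividing the directions by `‖κ n‖` multiplies the steps `h n` by `‖κ n‖`, so the steps need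
no longer tend to zero: this is why a Shi derivative, and not a contingent one, appears here. -/
theorem exists_neg_mem_sderiv_of_tendsto_norm_atTop (hYp : IsCone Yp)
    (hcpt : IsCompact (Yp ∩ Metric.sphere 0 1)) {z : Z} {y : Y} {h : ℕ → ℝ} {ζ : ℕ → Z}
    {η κ : ℕ → Y} (hpos : ∀ n, 0 < h n) (hh : Tendsto h atTop (𝓝 0))
    (hζ : Tendsto ζ atTop (𝓝 z)) (hη : Tendsto η atTop (𝓝 y)) (hκ : ∀ n, κ n ∈ Yp)
    (hmem : ∀ n, y₀ + h n • (η n - κ n) ∈ H (z₀ + h n • ζ n))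
    (htop : Tendsto (fun n => ‖κ n‖) atTop atTop) :
    ∃ e ∈ Yp ∩ Metric.sphere 0 1, -e ∈ Sderiv H z₀ y₀ 0 := by
  have hκ₀ : ∀ᶠ n in atTop, κ n ≠ 0 :=
    (htop.eventually_gt_atTop 0).mono fun _ => norm_pos_iff.1
  obtain ⟨e, he, φ, hφ, hφe⟩ := hcpt.tendsto_subseq'
    (hκ₀.mono fun n hn => hYp.inv_norm_smul_mem_sphere (hκ n) hn).frequently
  have hφ_top := hφ.tendsto_atTop
  have hinv : Tendsto (fun n => ‖κ (φ n)‖⁻¹) atTop (𝓝 0) := htop.inv_tendsto_atTop.comp hφ_top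
  have hφκ₀ : ∀ᶠ n in atTop, κ (φ n) ≠ 0 := hφ_top.eventually hκ₀
  refine ⟨e, he, mem_sderiv_of_eventually (h := fun n => h (φ n) * ‖κ (φ n)‖)
    (ζ := fun n => ‖κ (φ n)‖⁻¹ • ζ (φ n)) (η := fun n => ‖κ (φ n)‖⁻¹ • (η (φ n) - κ (φ n)))
    ?_ ?_ ?_ ?_ ?_⟩
  · exact hφκ₀.mono fun n hn => mul_pos (hpos _) (norm_pos_iff.2 hn)
  · simpa using hinv.smul (hζ.comp hφ_top)
  · simpa [smul_sub] using (hinv.smul (hη.comp hφ_top)).sub hφe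
  · have hlim : Tendsto (fun n => h (φ n) • ζ (φ n)) atTop (𝓝 0) := by
      simpa using (hh.comp hφ_top).smul (hζ.comp hφ_top)
    refine hlim.congr' ?_
    filter_upwards [hφκ₀] with n hn
    rw [mul_smul, smul_inv_smul₀ (norm_ne_zero_iff.2 hn)]
  · filter_upwards [hφκ₀] with n hn
    simpa only [mul_smul, smul_inv_smul₀ (norm_ne_zero_iff.2 hn)] using hmem (φ n)

theorem contingentDeriv_add_subset (hYp : IsCone Yp) (hcpt : IsCompact (Yp ∩ Metric.sphere 0 1))
    (hw : (z₀, y₀) ∈ closure (graph H)) (hS : Sderiv H z₀ y₀ 0 ∩ -Yp ⊆ {0}) (z : Z) :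
    contingentDeriv (fun w => H w + Yp) z₀ y₀ z ⊆ contingentDeriv H z₀ y₀ z + Yp := by
  intro y hy
  obtain ⟨h, ζ, η, hpos, hh, hζ, hη, hmem⟩ := (mem_contingentDeriv_iff_seq
    (closure_mono (graph_subset_graph_add hYp.zero_mem) hw)).1 hy
  have hdecomp (n : ℕ) : ∃ k ∈ Yp, y₀ + h n • (η n - k) ∈ H (z₀ + h n • ζ n) := by
    obtain ⟨v, hv, k, hk, hvk⟩ := hmem n
    refine ⟨(h n)⁻¹ • k, hYp.2 _ (inv_nonneg.2 (hpos n).le) k hk, ?_⟩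
    rwa [smul_sub, smul_inv_smul₀ (hpos n).ne', ← add_sub_assoc, ← eq_sub_of_add_eq hvk]
  choose κ hκ hκmem using hdecomp
  have hnot_top : ¬ Tendsto (fun n => ‖κ n‖) atTop atTop := fun htop => by
    obtain ⟨e, ⟨he, he_norm⟩, heS⟩ := exists_neg_mem_sderiv_of_tendsto_norm_atTop
      hYp hcpt hpos hh hζ hη hκ hκmem htop
    have he₀ : e = 0 := neg_eq_zero.1 (hS ⟨heS, by simpa using he⟩)
    simp [he₀] at he_norm
  obtain ⟨R, hR⟩ : ∃ R, ∃ᶠ n in atTop, ‖κ n‖ < R := by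
    simpa only [tendsto_atTop, not_forall, not_eventually, not_le] using hnot_top
  obtain ⟨k, ⟨hk, -⟩, φ, hφ, hφk⟩ := (hYp.isCompact_inter_closedBall hcpt R).tendsto_subseq'
    (hR.mono fun n hn => ⟨hκ n, mem_closedBall_zero_iff.2 hn.le⟩)
  have hφ_top := hφ.tendsto_atTop
  have hyk : y - k ∈ contingentDeriv H z₀ y₀ z := (mem_contingentDeriv_iff_seq hw).2
    ⟨h ∘ φ, ζ ∘ φ, fun n => η (φ n) - κ (φ n), fun n => hpos _, hh.comp hφ_top, hζ.comp hφ_top,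
      (hη.comp hφ_top).sub hφk, fun n => hκmem (φ n)⟩
  exact ⟨y - k, hyk, k, hk, sub_add_cancel y k⟩

theorem minSet_contingentDeriv_add (hYp : IsCone Yp) (hconv : Convex ℝ Yp) (hpt : IsPointed Yp)
    (hcpt : IsCompact (Yp ∩ Metric.sphere 0 1)) (hw : (z₀, y₀) ∈ closure (graph H))
    (hS : Sderiv H z₀ y₀ 0 ∩ -Yp ⊆ {0}) (z : Z) :
    MinSet Yp (contingentDeriv H z₀ y₀ z) =
      MinSet Yp (contingentDeriv (fun w => H w + Yp) z₀ y₀ z) :=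
  hpt.minSet_eq_of_subset_add (hYp.add_subset_of_convex hconv)
    (fun _ hy => contingentCone_mono (graph_subset_graph_add hYp.zero_mem) hw hy)
    (contingentDeriv_add_subset hYp hcpt hw hS z)

end Domination

section Lagrange

omit [NormedAddCommGroup X] [NormedSpace ℝ X]

variable {Ω : Set X} {F : X → Set Y} {G : X → Set Z} {Zp : Set Z} {Yp : Set Y} {y₀ : Y}

omit [NormedSpace ℝ Y] [NormedSpace ℝ Z] in
theorem vmap_add_subset_umap (Δ : Z → Set Y) (z : Z) :
    Vmap Ω F G Zp z + Δ z ⊆ Umap Ω F G Zp Δ := by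
  rintro _ ⟨y, hy, k, hk, rfl⟩
  obtain ⟨x, ⟨hx, g, hg, hgz⟩, hyx⟩ := Set.mem_iUnion₂.1 hy
  have hz : z ∈ G x + Zp := by
    obtain ⟨_, rfl, c, hc, rfl⟩ := hgz
    exact ⟨_, hg, c, hc, sub_add_cancel _ c⟩
  exact Set.mem_biUnion hx (Set.add_mem_add hyx (Set.mem_biUnion hz hk))

omit [NormedSpace ℝ Y] [NormedSpace ℝ Z] in
theorem LagrangeMultiplier.inter_neg_subset {Δ : Z → Set Y}
    (hΔ : LagrangeMultiplier Ω F G Zp Yp Δ y₀) (hpt : IsPointed Yp)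
    (hy₀ : y₀ ∈ Vmap Ω F G Zp 0) : Δ 0 ∩ -Yp ⊆ {0} := by
  rintro k ⟨hk, hnk⟩
  have hU : y₀ + k ∈ Umap Ω F G Zp Δ := vmap_add_subset_umap Δ 0 (Set.add_mem_add hy₀ hk)
  exact add_eq_left.1 (hpt.inter_sub_subset_add_iff.1 hΔ.2 _ hU (by simpa using hnk))

theorem sderiv_vmap_subset_lagrange (h₀ : (0 : Y) ∈ Yp) (z : Z) :
    Sderiv (Vmap Ω F G Zp) 0 y₀ z ⊆ Lagrange Ω F G Zp Yp y₀ (-z) := by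
  rintro y ⟨h, ζ, η, hpos, hζ, hη, -, hmem⟩ q hq
  have hgraph : graph (Vmap Ω F G Zp) ⊆ GraphVplus Ω F G Zp Yp := graph_subset_graph_add h₀
  have hnonneg (n : ℕ) : 0 ≤ q.1 (ζ n) + q.2 (η n) := by
    have hsep := hq.2 (0 + h n • ζ n, y₀ + h n • η n) (hgraph (hmem n))
    simp only [zero_add, map_add, map_smul, smul_eq_mul] at hsep
    exact nonneg_of_mul_nonneg_right (by linarith) (hpos n)
  have hlim : Tendsto (fun n => q.1 (ζ n) + q.2 (η n)) atTop (𝓝 (q.1 z + q.2 y)) :=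
    ((q.1.continuous.tendsto z).comp hζ).add ((q.2.continuous.tendsto y).comp hη)
  have hzy : 0 ≤ q.1 z + q.2 y := ge_of_tendsto' hlim hnonneg
  rw [map_neg]
  linarith

theorem stmt_17_general (Ω : Set X) (F : X → Set Y) (G : X → Set Z) (Zp : Set Z) (Yp : Set Y)
    (hYp : IsCone Yp) (hconv : Convex ℝ Yp) (hpt : IsPointed Yp)
    (hcpt : IsCompact (Yp ∩ Metric.sphere (0 : Y) 1))
    (y0 : Y) (hy0 : y0 ∈ Vmap Ω F G Zp 0)
    (hLM : LagrangeMultiplier Ω F G Zp Yp (Lagrange Ω F G Zp Yp y0) y0) (z : Z) :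
    MinSet Yp (contingentDeriv (Vmap Ω F G Zp) 0 y0 z) =
      MinSet Yp (contingentDeriv (VplusMap Ω F G Zp Yp) 0 y0 z) := by
  have hS : Sderiv (Vmap Ω F G Zp) 0 y0 0 ∩ -Yp ⊆ {0} := by
    refine subset_trans (Set.inter_subset_inter_left _ ?_) (hLM.inter_neg_subset hpt hy0)
    simpa only [neg_zero] using sderiv_vmap_subset_lagrange hYp.zero_mem (0 : Z)
  have hmem : ((0 : Z), y0) ∈ graph (Vmap Ω F G Zp) := hy0
  exact minSet_contingentDeriv_add hYp hconv hpt hcpt (subset_closure hmem) hS z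

end Lagrange

theorem stmt_17 (Ω : Set X) (F : X → Set Y) (G : X → Set Z) (Zp : Set Z) (Yp : Set Y)
    (hSt : StandingHyp Ω F G Zp Yp)
    (hYpPointed : IsPointed Yp)
    (y0 : Y) (hy0 : MinimalPoint Ω F G Zp Yp y0)
    (x0 : X) (hx0Ω : x0 ∈ Ω) (hx0feas : (G x0 ∩ (-Zp)).Nonempty) (hy0F : y0 ∈ F x0)
    (hcpt : IsCompact (Yp ∩ Metric.sphere (0:Y) 1))
    (hLM : LagrangeMultiplier Ω F G Zp Yp (Lagrange Ω F G Zp Yp y0) y0) :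
    ∀ z : Z, MinSet Yp (contingentDeriv (Vmap Ω F G Zp) 0 y0 z) =
      MinSet Yp (contingentDeriv (VplusMap Ω F G Zp Yp) 0 y0 z) :=
  have ⟨hYp, _, _, hconv, _⟩ := hSt
  stmt_17_general Ω F G Zp Yp hYp hconv hYpPointed hcpt y0 hy0.1 hLM

end Paper
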